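/- arXiv:1904.08096 — 6 statements merged into one kernel-verified Lean document; each statement's English description precedes it below -/
import Mathlib

section
/- For all n ∈ ℕ and all a, b, b' ∈ Finset Pk: Σ_{a' ∈ Finset Pk} [b' = a' ∪ b] · (M_n)_{a,a'} = Σ_{a' ∈ Finset Pk} (S^{n+1})_{(a,b),(a',b')}, where [φ] denotes 1 if φ holds and 0 otherwise. -/
/-!
Write `S` for the small-step matrix, `P` for the matrix forgetting the first component of a
configuration `(a, b)`, and `U N` for the matrix whose row `(a, b)` is the law of `a' ∪ b` when `a'`
is drawn from row `a` of `N`. In matrix form the claim reads `S ^ (n + 1) * P = U (M n)`. Since the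
rows of `B` sum to one, `S * P = U 1`. One step from `(a, b)` draws `c` from row `a` of `B` and
moves to `(c, a ∪ b)`, so the identity `c ∪ (a ∪ b) = (a ∪ c) ∪ b` shows that multiplying `U (M n)`
by `S` on the left gives `U (M (n + 1))`.
-/

section Pushforward

variable {ι α β γ R : Type*} [Fintype α] [DecidableEq β] [AddCommMonoid R]

/-- The matrix whose `i`-th row is the pushforward along `f i` of the `i`-th row of `N`, a row being
regarded as an `R`-valued measure on its finite index type. -/
def rowMap (f : ι → α → β) (N : Matrix ι α R) : Matrix ι β R :=
  .of fun i b => ∑ a, if b = f i a then N i a else 0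

theorem rowMap_rowMap [Fintype β] [DecidableEq γ] (f : ι → α → β) (g : ι → β → γ)
    (N : Matrix ι α R) : rowMap g (rowMap f N) = rowMap (fun i => g i ∘ f i) N := by
  ext i z
  calc ∑ b, (if z = g i b then ∑ a, (if b = f i a then N i a else 0) else 0)
      = ∑ b, ∑ a, if b = f i a then (if z = g i b then N i a else 0) else 0 := by
        refine Fintype.sum_congr _ _ fun b => ?_
        split_ifs <;> simp
    _ = ∑ a, if z = g i (f i a) then N i a else 0 := by
        rw [Finset.sum_comm]
        simp only [Finset.sum_ite_eq', Finset.mem_univ, if_true]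

end Pushforward

section Accumulator

variable {α β γ R : Type*} [Fintype α] [DecidableEq β] [Semiring R]

/-- The small-step matrix of `B` with an accumulator in `β`: a step from `(a, b)` draws the new
first component from row `a` of `B` and updates the accumulator to `op a b`. -/
def smallStep (op : α → β → β) (B : Matrix α α R) : Matrix (α × β) (α × β) R :=
  .of fun x y => if y.2 = op x.1 x.2 then B x.1 y.1 else 0

/-- The matrix whose row `(a, b)` is the pushforward of row `a` of `N` along `a' ↦ op a' b`: the
law of the accumulator `b` after one update by an `a'` drawn from row `a` of `N`. -/
def accumulate (op : α → β → β) (N : Matrix α α R) : Matrix (α × β) β R :=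
  rowMap (fun x a' => op a' x.2) (N.submatrix Prod.fst id)

variable (α β R) in
/-- The matrix of the projection `(a, b) ↦ b`. Multiplying by it on the right sums out the first
component. -/
def sndMatrix : Matrix (α × β) β R :=
  (1 : Matrix β β R).submatrix Prod.snd id

theorem mul_sndMatrix_apply [Fintype β] (N : Matrix γ (α × β) R) (x : γ) (b : β) :
    (N * sndMatrix α β R) x b = ∑ a, N x (a, b) := by
  simp [sndMatrix, Matrix.mul_apply, Matrix.one_apply, Fintype.sum_prod_type]

theorem smallStep_mul_apply [Fintype β] (op : α → β → β) (B : Matrix α α R)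
    (N : Matrix (α × β) γ R) (a : α) (b : β) (z : γ) :
    (smallStep op B * N) (a, b) z = ∑ c, B a c * N (c, op a b) z := by
  simp [smallStep, Matrix.mul_apply, Fintype.sum_prod_type]

theorem accumulate_apply (op : α → β → β) (N : Matrix α α R) (a : α) (b b' : β) :
    accumulate op N (a, b) b' = ∑ a', if b' = op a' b then N a a' else 0 :=
  rfl

theorem accumulate_one_apply [DecidableEq α] (op : α → β → β) (a : α) (b b' : β) :
    accumulate op (1 : Matrix α α R) (a, b) b' = if b' = op a b then 1 else 0 := by
  rw [accumulate_apply, Fintype.sum_eq_single a fun a' ha' => by simp [ha'.symm],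
    Matrix.one_apply_eq]

theorem smallStep_mul_sndMatrix [Fintype β] [DecidableEq α] (op : α → β → β) {B : Matrix α α R}
    (hB : ∀ a, ∑ a', B a a' = 1) :
    smallStep op B * sndMatrix α β R = accumulate op 1 := by
  ext ⟨a, b⟩ b'
  calc (smallStep op B * sndMatrix α β R) (a, b) b'
      = ∑ c, B a c * (if op a b = b' then 1 else 0) := smallStep_mul_apply ..
    _ = if b' = op a b then 1 else 0 := by
        rw [← Finset.sum_mul, hB, one_mul]
        simp only [eq_comm]
    _ = accumulate op 1 (a, b) b' := (accumulate_one_apply ..).symm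

theorem smallStep_mul_accumulate_apply [Fintype β] (op : α → β → β) (B N : Matrix α α R)
    (a : α) (b b' : β) :
    (smallStep op B * accumulate op N) (a, b) b' = accumulate op (B * N) (a, op a b) b' := by
  rw [smallStep_mul_apply]
  simp only [accumulate_apply, Matrix.mul_apply, Finset.mul_sum, mul_ite, mul_zero]
  rw [Finset.sum_comm]
  refine Fintype.sum_congr _ _ fun d => ?_
  split_ifs <;> simp

end Accumulator

section Unrolling

variable {α R : Type*} [Fintype α] [DecidableEq α] [Semiring R]
  (op : α → α → α) [Std.Commutative op] [Std.Associative op]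

theorem accumulate_rowMap_apply (N : Matrix α α R) (a b b' : α) :
    accumulate op (rowMap op N) (a, b) b' = accumulate op N (a, op a b) b' := by
  have swap (c : α) : op (op a c) b = op c (op a b) := by
    rw [Std.Commutative.comm (op := op) a c, Std.Associative.assoc (op := op)]
  calc accumulate op (rowMap op N) (a, b) b'
      = rowMap (fun _ a' => op a' b) (rowMap op N) a b' := rfl
    _ = ∑ c, if b' = op (op a c) b then N a c else 0 := by rw [rowMap_rowMap]; rfl
    _ = accumulate op N (a, op a b) b' := by simp only [swap, accumulate_apply]

theorem smallStep_mul_accumulate (B N : Matrix α α R) :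
    smallStep op B * accumulate op N = accumulate op (rowMap op (B * N)) := by
  ext ⟨a, b⟩ b'
  rw [smallStep_mul_accumulate_apply, accumulate_rowMap_apply]

theorem smallStep_pow_succ_mul_sndMatrix {B : Matrix α α R} (hB : ∀ a, ∑ a', B a a' = 1)
    {M : ℕ → Matrix α α R} (hM0 : M 0 = 1) (hMsucc : ∀ n, M (n + 1) = rowMap op (B * M n)) (n : ℕ) :
    smallStep op B ^ (n + 1) * sndMatrix α α R = accumulate op (M n) := by
  induction n with
  | zero => rw [zero_add, pow_one, hM0, smallStep_mul_sndMatrix op hB]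
  | succ n ih => rw [pow_succ', Matrix.mul_assoc, ih, smallStep_mul_accumulate, hMsucc]

theorem unrolling_small_step_general (B : Matrix α α R) (hBrow : ∀ a, ∑ a', B a a' = 1)
    (S : Matrix (α × α) (α × α) R)
    (hS : ∀ a b a' b', S (a, b) (a', b') = if b' = op a b then B a a' else 0)
    (M : ℕ → Matrix α α R) (hM0 : M 0 = 1)
    (hMsucc : ∀ n a b, M (n + 1) a b = ∑ c, (if b = op a c then (1 : R) else 0) * (B * M n) a c)
    (n : ℕ) (a b b' : α) :
    ∑ a', (if b' = op a' b then (1 : R) else 0) * M n a a'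
      = ∑ a', (S ^ (n + 1)) (a, b) (a', b') := by
  have S_eq : S = smallStep op B := by
    ext ⟨a, b⟩ ⟨a', b'⟩
    exact hS a b a' b'
  have M_succ (n : ℕ) : M (n + 1) = rowMap op (B * M n) := by
    ext a b
    simp only [hMsucc, boole_mul, rowMap, Matrix.of_apply]
  calc ∑ a', (if b' = op a' b then (1 : R) else 0) * M n a a'
      = accumulate op (M n) (a, b) b' := by simp only [boole_mul, accumulate_apply]
    _ = (S ^ (n + 1) * sndMatrix α α R) (a, b) b' := by
        rw [S_eq, smallStep_pow_succ_mul_sndMatrix op hBrow hM0 M_succ]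
    _ = ∑ a', (S ^ (n + 1)) (a, b) (a', b') := mul_sndMatrix_apply ..

end Unrolling

/-- For all `n`, `a`, `b`, `b'`:
`∑_{a'} [b' = a' ∪ b] ⬝ (M n)_{a,a'} = ∑_{a'} (S^(n+1))_{(a,b),(a',b')}`. -/
theorem unrolling_small_step {Pk : Type*} [Fintype Pk] [DecidableEq Pk]
    (B : Matrix (Finset Pk) (Finset Pk) ℝ)
    (hBnn : ∀ a a', 0 ≤ B a a')
    (hBrow : ∀ a, ∑ a', B a a' = 1)
    (S : Matrix (Finset Pk × Finset Pk) (Finset Pk × Finset Pk) ℝ)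
    (hS : ∀ a b a' b', S (a, b) (a', b') = if b' = a ∪ b then B a a' else 0)
    (M : ℕ → Matrix (Finset Pk) (Finset Pk) ℝ)
    (hM0 : M 0 = 1)
    (hMsucc : ∀ n a b, M (n + 1) a b = ∑ c, (if b = a ∪ c then (1 : ℝ) else 0) * (B * M n) a c)
    (n : ℕ) (a b b' : Finset Pk) :
    ∑ a', (if b' = a' ∪ b then (1 : ℝ) else 0) * M n a a'
      = ∑ a', (S ^ (n + 1)) (a, b) (a', b') :=
  unrolling_small_step_general (· ∪ ·) B hBrow S hS M hM0 hMsucc n a b b'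
end

section
/- Each of the matrices S, U, and the matrix product S·U is monotone in the following sense: for T ∈ {S, U, S·U}, if (T^n)_{(a,b),(a',b')} > 0 for some n ≥ 0, then b ⊆ b'. -/
open scoped Classical

section MonotoneSubmonoid

variable (R : Type*) {ι α : Type*} [Semiring R] [Fintype ι] [DecidableEq ι] [Preorder α]

/-- The square matrices all of whose nonzero entries `M i j` satisfy `f i ≤ f j`, i.e. whose
transitions never decrease `f`. `Matrix.BlockTriangular` only asks that `M i j = 0` when
`f j < f i`, which in a non-linear order is weaker and need not be closed under products. -/
def monotoneSubmonoid (f : ι → α) : Submonoid (Matrix ι ι R) where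
  carrier := {M | ∀ i j, M i j ≠ 0 → f i ≤ f j}
  one_mem' i j hij := by
    obtain rfl : i = j := of_not_not fun hne => hij (Matrix.one_apply_ne hne)
    exact le_rfl
  mul_mem' {M N} hM hN i j hij := by
    rw [Matrix.mul_apply] at hij
    obtain ⟨k, -, hk⟩ := Finset.exists_ne_zero_of_sum_ne_zero hij
    exact (hM i k (left_ne_zero_of_mul hk)).trans (hN k j (right_ne_zero_of_mul hk))

variable {R}

theorem mem_monotoneSubmonoid {f : ι → α} {M : Matrix ι ι R} :
    M ∈ monotoneSubmonoid R f ↔ ∀ i j, M i j ≠ 0 → f i ≤ f j :=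
  Iff.rfl

theorem le_of_pow_apply_ne_zero {f : ι → α} {M : Matrix ι ι R}
    (hM : M ∈ monotoneSubmonoid R f) (n : ℕ) {i j : ι} (hij : (M ^ n) i j ≠ 0) : f i ≤ f j :=
  mem_monotoneSubmonoid.mp (pow_mem hM n) i j hij

end MonotoneSubmonoid

theorem monotone_chains_general {R α : Type*} [Semiring R] [Fintype α] [DecidableEq α]
    [SemilatticeSup α] [OrderBot α] (B : Matrix α α R) (S U : Matrix (α × α) (α × α) R)
    (hS : ∀ a b a' b', S (a, b) (a', b') = if b' = a ⊔ b then B a a' else 0)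
    (Reset : α × α → Prop)
    (hU : ∀ a b a' b', U (a, b) (a', b') =
      if b' = b ∧ ((Reset (a, b) ∧ a' = ⊥) ∨ (¬ Reset (a, b) ∧ a' = a)) then 1 else 0) :
    (∀ (n : ℕ) (a b a' b' : α), (S ^ n) (a, b) (a', b') ≠ 0 → b ≤ b') ∧
    (∀ (n : ℕ) (a b a' b' : α), (U ^ n) (a, b) (a', b') ≠ 0 → b ≤ b') ∧
    (∀ (n : ℕ) (a b a' b' : α), ((S * U) ^ n) (a, b) (a', b') ≠ 0 → b ≤ b') := by
  have S_mem : S ∈ monotoneSubmonoid R Prod.snd := by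
    rw [mem_monotoneSubmonoid]
    rintro ⟨a, b⟩ ⟨a', b'⟩ h
    rw [hS, ite_ne_right_iff] at h
    exact le_sup_right.trans_eq h.1.symm
  have U_mem : U ∈ monotoneSubmonoid R Prod.snd := by
    rw [mem_monotoneSubmonoid]
    rintro ⟨a, b⟩ ⟨a', b'⟩ h
    rw [hU, ite_ne_right_iff] at h
    exact h.1.1.ge
  exact ⟨fun n _ _ _ _ => le_of_pow_apply_ne_zero S_mem n,
    fun n _ _ _ _ => le_of_pow_apply_ne_zero U_mem n,
    fun n _ _ _ _ => le_of_pow_apply_ne_zero (mul_mem S_mem U_mem) n⟩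

/-- `S`, `U`, and `S·U` are monotone: if `(T^n)_{(a,b),(a',b')} > 0` then `b ⊆ b'`. -/
theorem monotone_chains {Pk : Type*} [Fintype Pk] [DecidableEq Pk]
    (B : Matrix (Finset Pk) (Finset Pk) ℝ)
    (hBnn : ∀ a a', 0 ≤ B a a')
    (hBrow : ∀ a, ∑ a', B a a' = 1)
    (S U : Matrix (Finset Pk × Finset Pk) (Finset Pk × Finset Pk) ℝ)
    (hS : ∀ a b a' b', S (a, b) (a', b') = if b' = a ∪ b then B a a' else 0)
    (Saturated : Finset Pk × Finset Pk → Prop)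
    (hSat : ∀ a b, Saturated (a, b) ↔
      ∀ (n : ℕ) (a' b' : Finset Pk), 0 < (S ^ n) (a, b) (a', b') → b' = b)
    (hU : ∀ a b a' b', U (a, b) (a', b') =
      if b' = b ∧ ((Saturated (a, b) ∧ a' = ∅) ∨ (¬ Saturated (a, b) ∧ a' = a))
      then 1 else 0) :
    (∀ (n : ℕ) (a b a' b' : Finset Pk), 0 < (S ^ n) (a, b) (a', b') → b ⊆ b') ∧
    (∀ (n : ℕ) (a b a' b' : Finset Pk), 0 < (U ^ n) (a, b) (a', b') → b ⊆ b') ∧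
    (∀ (n : ℕ) (a b a' b' : Finset Pk), 0 < ((S * U) ^ n) (a, b) (a', b') → b ⊆ b') := by
  obtain ⟨S_mono, U_mono, SU_mono⟩ := monotone_chains_general B S U hS Saturated hU
  exact ⟨fun n _ _ _ _ h => S_mono n _ _ _ _ h.ne', fun n _ _ _ _ h => U_mono n _ _ _ _ h.ne',
    fun n _ _ _ _ h => SU_mono n _ _ _ _ h.ne'⟩
end

section
/- If M is substochastic and every state can reach a defective state, then the matrix I − M is invertible (where I is the identity matrix). -/
/-!
Some power of `M` has row sum `< 1` at every state that reaches a defective one, since one further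
step from there loses mass. If `v ≤ M v`, then `v ≤ M ^ n v` for all `n`. At a state `s` where `v`
has a positive maximum `m`, choosing `n` so that row `s` of `M ^ n` sums to less than `1` would
give `m ≤ (∑ t, (M ^ n) s t) * m < m`. Hence `v ≤ 0`. If `v = M v`, this applies to `v` and `-v`.
-/

section RowSums

variable {ι κ τ R : Type*} [Fintype κ] [Fintype τ]

theorem sum_row_mul [NonUnitalNonAssocSemiring R] (A : Matrix ι κ R) (B : Matrix κ τ R) (i : ι) :
    ∑ k, (A * B) i k = ∑ j, A i j * ∑ k, B j k := by
  simp only [Matrix.mul_apply, Finset.mul_sum]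
  exact Finset.sum_comm

variable [Semiring R] [PartialOrder R]

theorem sum_row_mul_le [IsOrderedRing R] {A : Matrix ι κ R} {B : Matrix κ τ R} {i : ι}
    (hA : ∀ j, 0 ≤ A i j) (hB : ∀ j, ∑ k, B j k ≤ 1) :
    ∑ k, (A * B) i k ≤ ∑ j, A i j := by
  rw [sum_row_mul]
  exact Finset.sum_le_sum fun j _ => mul_le_of_le_one_right (hA j) (hB j)

theorem sum_row_mul_lt [IsStrictOrderedRing R] {A : Matrix ι κ R} {B : Matrix κ τ R} {i : ι}
    {j : κ} (hA : ∀ j, 0 ≤ A i j) (hB : ∀ j, ∑ k, B j k ≤ 1) (hj : ∑ k, B j k < 1)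
    (hij : 0 < A i j) :
    ∑ k, (A * B) i k < ∑ j, A i j := by
  rw [sum_row_mul]
  exact Finset.sum_lt_sum (fun j _ => mul_le_of_le_one_right (hA j) (hB j))
    ⟨j, Finset.mem_univ j, mul_lt_of_lt_one_right hij hj⟩

variable {S : Type*} [Fintype S] [DecidableEq S] {M : Matrix S S R}

theorem sum_row_pow_le_one [IsOrderedRing R] (hM : ∀ s t, 0 ≤ M s t) (hsub : ∀ s, ∑ t, M s t ≤ 1)
    (n : ℕ) (s : S) : ∑ t, (M ^ n) s t ≤ 1 := by
  induction n with
  | zero => simp [Matrix.one_apply]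
  | succ n ih =>
    rw [pow_succ]
    exact (sum_row_mul_le (Matrix.pow_apply_nonneg hM n s) hsub).trans ih

theorem sum_row_pow_succ_lt_one [IsStrictOrderedRing R] (hM : ∀ s t, 0 ≤ M s t)
    (hsub : ∀ s, ∑ t, M s t ≤ 1) {n : ℕ} {s t : S} (ht : ∑ u, M t u < 1) (hst : 0 < (M ^ n) s t) :
    ∑ u, (M ^ (n + 1)) s u < 1 := by
  rw [pow_succ]
  exact (sum_row_mul_lt (Matrix.pow_apply_nonneg hM n s) hsub ht hst).trans_le
    (sum_row_pow_le_one hM hsub n s)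

end RowSums

section MaximumPrinciple

open Matrix

theorem monotone_mulVec {ι κ R : Type*} [Fintype κ] [Semiring R] [PartialOrder R]
    [IsOrderedRing R] {A : Matrix ι κ R} (hA : ∀ i j, 0 ≤ A i j) :
    Monotone fun v => A *ᵥ v :=
  fun _ _ hvw i => dotProduct_le_dotProduct_of_nonneg_left hvw (hA i)

variable {S R : Type*} [Fintype S] [DecidableEq S] {M : Matrix S S R} {v : S → R}

theorem le_pow_mulVec [Semiring R] [PartialOrder R] [IsOrderedRing R] (hM : ∀ s t, 0 ≤ M s t)
    (hv : v ≤ M *ᵥ v) (n : ℕ) : v ≤ M ^ n *ᵥ v := by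
  induction n with
  | zero => simp
  | succ n ih =>
    calc v ≤ M ^ n *ᵥ v := ih
      _ ≤ M ^ n *ᵥ (M *ᵥ v) := monotone_mulVec (pow_apply_nonneg hM n) hv
      _ = M ^ (n + 1) *ᵥ v := by rw [mulVec_mulVec, pow_succ]

theorem nonpos_of_le_mulVec [Semiring R] [LinearOrder R] [IsStrictOrderedRing R]
    (hM : ∀ s t, 0 ≤ M s t) (hpow : ∀ s, ∃ n : ℕ, ∑ t, (M ^ n) s t < 1) (hv : v ≤ M *ᵥ v) :
    v ≤ 0 := by
  intro i
  have : Nonempty S := ⟨i⟩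
  obtain ⟨s, hmax⟩ := Finite.exists_max v
  suffices hs : v s ≤ 0 from (hmax i).trans hs
  by_contra! hpos
  obtain ⟨n, hn⟩ := hpow s
  have hlt : v s < v s :=
    calc v s ≤ ∑ t, (M ^ n) s t * v t := le_pow_mulVec hM hv n s
      _ ≤ ∑ t, (M ^ n) s t * v s := Finset.sum_le_sum fun t _ =>
          mul_le_mul_of_nonneg_left (hmax t) (pow_apply_nonneg hM n s t)
      _ = (∑ t, (M ^ n) s t) * v s := by rw [Finset.sum_mul]
      _ < v s := mul_lt_of_lt_one_left hpos hn
  exact hlt.false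

theorem eq_zero_of_mulVec_eq_self [Ring R] [LinearOrder R] [IsStrictOrderedRing R]
    (hM : ∀ s t, 0 ≤ M s t) (hpow : ∀ s, ∃ n : ℕ, ∑ t, (M ^ n) s t < 1) (hv : M *ᵥ v = v) :
    v = 0 := by
  have hv_nonpos : v ≤ 0 := nonpos_of_le_mulVec hM hpow hv.ge
  have hneg_nonpos : -v ≤ 0 := nonpos_of_le_mulVec hM hpow (by rw [mulVec_neg, hv])
  exact hv_nonpos.antisymm (neg_nonpos.mp hneg_nonpos)

end MaximumPrinciple

theorem sub_one_sub_invertible_general {S K : Type*} [Fintype S] [DecidableEq S]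
    [Field K] [LinearOrder K] [IsStrictOrderedRing K] {M : Matrix S S K}
    (hM : ∀ s t, 0 ≤ M s t) (hpow : ∀ s, ∃ n : ℕ, ∑ t, (M ^ n) s t < 1) :
    IsUnit (1 - M) := by
  rw [Matrix.isUnit_iff_isUnit_det, isUnit_iff_ne_zero]
  intro hdet
  obtain ⟨v, hv_ne, hv⟩ := Matrix.exists_mulVec_eq_zero_iff.mpr hdet
  rw [Matrix.sub_mulVec, Matrix.one_mulVec, sub_eq_zero] at hv
  exact hv_ne (eq_zero_of_mulVec_eq_self hM hpow hv.symm)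

/-- If `M` is substochastic and every state can reach a defective state,
then `I - M` is invertible. -/
theorem sub_one_sub_invertible {S : Type*} [Fintype S] [DecidableEq S]
    (M : Matrix S S ℝ)
    (hnn : ∀ s t, 0 ≤ M s t)
    (hsub : ∀ s, ∑ t, M s t ≤ 1)
    (hreach : ∀ s, ∃ (n : ℕ) (t : S), (∑ u, M t u < 1) ∧ 0 < (M ^ n) s t) :
    IsUnit (1 - M) :=
  sub_one_sub_invertible_general hnn fun s =>
    let ⟨n, _, ht, hst⟩ := hreach s
    ⟨n + 1, sum_row_pow_succ_lt_one hnn hsub ht hst⟩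
end

section
/- If M is substochastic and every state can reach a defective state, then the series of matrix powers Σ_{n=0}^∞ M^n converges (entrywise) and its sum equals (I − M)⁻¹; that is, the family (M^n)_{n∈ℕ} has sum (I − M)⁻¹ in the space of S × S real matrices. -/
/-!
For a nonnegative matrix `M` and a nonnegative vector `v`, the partial sums `∑ n < N, M ^ n`
send `v - M *ᵥ v` to `v - M ^ N *ᵥ v ≤ v`. If `M *ᵥ v ≤ v`, this bounds the series
`∑ n, (M ^ n) s t` for every `t` where the inequality is strict, and
`(M ^ n) s u * (M ^ k) u t ≤ (M ^ (n + k)) s t` carries summability back to every `u` from which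
such a `t` can be reached. The substochastic case is `v = 1`.
-/

open Finset Matrix

theorem mul_le_dotProduct {S R : Type*} [Fintype S] [NonUnitalNonAssocSemiring R] [PartialOrder R]
    [IsOrderedAddMonoid R] [PosMulMono R] {v w : S → R} (hv : 0 ≤ v) (hw : 0 ≤ w) (s : S) :
    v s * w s ≤ v ⬝ᵥ w :=
  single_le_sum (f := fun t ↦ v t * w t) (fun t _ ↦ mul_nonneg (hv t) (hw t)) (mem_univ s)

theorem geom_sum_mulVec_sub_le {S R : Type*} [Fintype S] [DecidableEq S] [Ring R] [PartialOrder R]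
    [IsOrderedRing R] {M : Matrix S S R} (hM : ∀ s t, 0 ≤ M s t) {v : S → R} (hv : 0 ≤ v) (N : ℕ) :
    (∑ n ∈ range N, M ^ n) *ᵥ (v - M *ᵥ v) ≤ v :=
  calc (∑ n ∈ range N, M ^ n) *ᵥ (v - M *ᵥ v)
      = ((∑ n ∈ range N, M ^ n) * (1 - M)) *ᵥ v := by
        rw [← mulVec_mulVec, sub_mulVec, one_mulVec]
    _ = v - M ^ N *ᵥ v := by rw [geom_sum_mul_neg, sub_mulVec, one_mulVec]
    _ ≤ v := sub_le_self v fun s ↦ dotProduct_nonneg_of_nonneg (pow_apply_nonneg hM N s) hv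

section Real

variable {S : Type*} [Fintype S] [DecidableEq S] {M : Matrix S S ℝ}

theorem summable_matrix_pow_apply_of_mulVec_lt (hM : ∀ s t, 0 ≤ M s t) {v : S → ℝ} (hv : 0 ≤ v)
    (hMv : M *ᵥ v ≤ v) {t : S} (ht : (M *ᵥ v) t < v t) (s : S) :
    Summable fun n : ℕ ↦ (M ^ n) s t := by
  have hd : 0 < (v - M *ᵥ v) t := sub_pos.mpr ht
  refine summable_of_sum_range_le (c := v s / (v - M *ᵥ v) t)
    (fun n ↦ pow_apply_nonneg hM n s t) fun N ↦ ?_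
  have hrow : 0 ≤ (∑ n ∈ range N, M ^ n) s := fun u ↦ by
    rw [Matrix.sum_apply]
    exact sum_nonneg fun n _ ↦ pow_apply_nonneg hM n s u
  rw [le_div_iff₀ hd, ← Matrix.sum_apply]
  calc (∑ n ∈ range N, M ^ n) s t * (v - M *ᵥ v) t
      ≤ ((∑ n ∈ range N, M ^ n) *ᵥ (v - M *ᵥ v)) s :=
        mul_le_dotProduct hrow (sub_nonneg.mpr hMv) t
    _ ≤ v s := geom_sum_mulVec_sub_le hM hv N s

theorem summable_matrix_pow_apply_of_pow_apply_pos (hM : ∀ s t, 0 ≤ M s t) {s t u : S} {k : ℕ}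
    (hst : Summable fun n : ℕ ↦ (M ^ n) s t) (hut : 0 < (M ^ k) u t) :
    Summable fun n : ℕ ↦ (M ^ n) s u := by
  rw [← summable_mul_right_iff hut.ne']
  refine ((summable_nat_add_iff k).mpr hst).of_nonneg_of_le
    (fun n ↦ mul_nonneg (pow_apply_nonneg hM n s u) hut.le) fun n ↦ ?_
  rw [pow_add]
  exact mul_le_dotProduct (w := ((M ^ k) · t)) (pow_apply_nonneg hM n s)
    (pow_apply_nonneg hM k · t) u

end Real

theorem hasSum_matrix_pow_inv {S R : Type*} [Fintype S] [DecidableEq S] [CommRing R]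
    [TopologicalSpace R] [IsTopologicalRing R] [T2Space R] {M : Matrix S S R}
    (h : Summable fun n : ℕ ↦ M ^ n) : HasSum (fun n : ℕ ↦ M ^ n) (1 - M)⁻¹ := by
  rw [inv_eq_right_inv h.one_sub_mul_tsum_pow]
  exact h.hasSum

theorem geometric_series_sum_general {S : Type*} [Fintype S] [DecidableEq S] {M : Matrix S S ℝ}
    (hM : ∀ s t, 0 ≤ M s t) {v : S → ℝ} (hv : 0 ≤ v) (hMv : M *ᵥ v ≤ v)
    (hreach : ∀ s, ∃ (n : ℕ) (t : S), (M *ᵥ v) t < v t ∧ 0 < (M ^ n) s t) :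
    HasSum (fun n : ℕ ↦ M ^ n) (1 - M)⁻¹ := by
  refine hasSum_matrix_pow_inv (Pi.summable.mpr fun s ↦ Pi.summable.mpr fun u ↦ ?_)
  obtain ⟨k, t, ht, hut⟩ := hreach u
  exact summable_matrix_pow_apply_of_pow_apply_pos hM
    (summable_matrix_pow_apply_of_mulVec_lt hM hv hMv ht s) hut

/-- If `M` is substochastic and every state can reach a defective state, then the series
`∑ n, M ^ n` converges entrywise with sum `(I - M)⁻¹`. -/
theorem geometric_series_sum {S : Type*} [Fintype S] [DecidableEq S]
    (M : Matrix S S ℝ)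
    (hnn : ∀ s t, 0 ≤ M s t)
    (hsub : ∀ s, ∑ t, M s t ≤ 1)
    (hreach : ∀ s, ∃ (n : ℕ) (t : S), (∑ u, M t u < 1) ∧ 0 < (M ^ n) s t) :
    HasSum (fun n : ℕ => M ^ n) (1 - M)⁻¹ := by
  have hrow : M *ᵥ 1 = fun s ↦ ∑ t, M s t := by
    ext s
    simp only [mulVec, dotProduct_one]
  exact geometric_series_sum_general hnn zero_le_one (hrow.trans_le hsub)
    (by simpa only [hrow, Pi.one_apply] using hreach)
end

section
/- Under these assumptions, the matrix I − Q is invertible and the powers of T converge entrywise to the block matrix with blocks I, 0, (I − Q)⁻¹·R, 0; that is, lim_{n→∞} T^n = fromBlocks I 0 ((I − Q)⁻¹ · R) 0, where I is the A × A identity matrix. -/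
/-!
In the `ℓ^∞` operator norm, the largest absolute row sum, a stochastic matrix is a contraction.
The powers of `T = fromBlocks 1 0 R Q` are `fromBlocks 1 0 ((∑ i < n, Q ^ i) * R) (Q ^ n)`, so
every entry of `T ^ n` leading from a transient to an absorbing state is mass missing from the
corresponding row of `Q ^ n`. Hence each row sum of `Q ^ n` drops below `1` for some `n`, and stays
there because `Q` is a contraction; as there are finitely many rows, some power of `Q` has norm less
than `1`. Therefore `Q ^ n → 0`, and the geometric sums converge to `(1 - Q)⁻¹`.
-/

open Filter Finset Matrix Topology

section TopologicallyNilpotent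

theorem isTopologicallyNilpotent_of_pow {M : Type*} [MonoidWithZero M] [TopologicalSpace M]
    [ContinuousMul M] {a : M} {N : ℕ} (hN : N ≠ 0) (h : IsTopologicallyNilpotent (a ^ N)) :
    IsTopologicallyNilpotent a := by
  intro U hU
  have residue (r : ℕ) : Tendsto (fun q ↦ a ^ r * (a ^ N) ^ q) atTop (𝓝 0) := by
    simpa only [mul_zero] using h.const_mul (a ^ r)
  have all_residues : ∀ᶠ q in atTop, ∀ r ∈ range N, a ^ r * (a ^ N) ^ q ∈ U :=
    (eventually_all_finset _).2 fun r _ ↦ (residue r).eventually_mem hU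
  change ∀ᶠ k in atTop, a ^ k ∈ U
  filter_upwards [(Nat.tendsto_div_const_atTop hN).eventually all_residues] with k hk
  simpa only [← pow_mul, ← pow_add, Nat.mod_add_div] using
    hk _ (mem_range.2 (Nat.mod_lt k (Nat.pos_of_ne_zero hN)))

variable {n α : Type*} [Fintype n] [DecidableEq n]

theorem isUnit_one_sub_of_isTopologicallyNilpotent [NormedCommRing α] [HasSummableGeomSeries α]
    {Q : Matrix n n α} (hQ : IsTopologicallyNilpotent Q) : IsUnit (1 - Q) := by
  have det_tendsto : Tendsto (fun k ↦ (1 - Q ^ k).det) atTop (𝓝 1) := by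
    have det_continuous : Continuous fun M : Matrix n n α ↦ (1 - M).det :=
      (continuous_const.sub continuous_id).matrix_det
    simpa only [Function.comp_def, sub_zero, det_one] using (det_continuous.tendsto 0).comp hQ
  obtain ⟨k, hk⟩ := (det_tendsto.eventually_mem (Units.isOpen.mem_nhds isUnit_one)).exists
  have isUnit_one_sub_pow : IsUnit (1 - Q ^ k) := (isUnit_iff_isUnit_det _).2 hk
  rw [← mul_neg_geom_sum] at isUnit_one_sub_pow
  exact isUnit_of_mul_isUnit_left isUnit_one_sub_pow

theorem tendsto_geom_sum_of_isTopologicallyNilpotent [CommRing α] [TopologicalSpace α]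
    [IsTopologicalRing α] {Q : Matrix n n α} (hu : IsUnit (1 - Q))
    (hQ : IsTopologicallyNilpotent Q) :
    Tendsto (fun k ↦ ∑ i ∈ range k, Q ^ i) atTop (𝓝 (1 - Q)⁻¹) := by
  have geom_sum_eq (k : ℕ) : ∑ i ∈ range k, Q ^ i = (1 - Q)⁻¹ * (1 - Q ^ k) := by
    rw [← mul_neg_geom_sum, nonsing_inv_mul_cancel_left _ _ ((isUnit_iff_isUnit_det _).1 hu)]
  simpa only [geom_sum_eq, sub_zero, mul_one] using (hQ.const_sub 1).const_mul (1 - Q)⁻¹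

end TopologicallyNilpotent

section BlockPowers

variable {m n α : Type*} [Fintype m] [Fintype n] [DecidableEq m] [DecidableEq n]

theorem fromBlocks_one_zero_pow [Semiring α] (R : Matrix n m α) (Q : Matrix n n α) (k : ℕ) :
    fromBlocks (1 : Matrix m m α) 0 R Q ^ k =
      fromBlocks 1 0 ((∑ i ∈ range k, Q ^ i) * R) (Q ^ k) := by
  induction k with
  | zero => simp
  | succ k ih =>
    rw [pow_succ', ih, fromBlocks_multiply, geom_sum_succ]
    simp [Matrix.add_mul, Matrix.mul_assoc, pow_succ', add_comm]

theorem tendsto_fromBlocks_one_zero_pow [CommRing α] [TopologicalSpace α] [IsTopologicalRing α]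
    (R : Matrix n m α) {Q : Matrix n n α} (hu : IsUnit (1 - Q))
    (hQ : IsTopologicallyNilpotent Q) :
    Tendsto (fun k ↦ fromBlocks (1 : Matrix m m α) 0 R Q ^ k) atTop
      (𝓝 (fromBlocks 1 0 ((1 - Q)⁻¹ * R) 0)) := by
  have assemble_continuous : Continuous fun B : Matrix n n α × Matrix n n α ↦
      fromBlocks (1 : Matrix m m α) 0 (B.1 * R) B.2 :=
    continuous_const.matrix_fromBlocks continuous_const
      (continuous_fst.matrix_mul continuous_const) continuous_snd
  have blocks_tendsto : Tendsto (fun k ↦ (∑ i ∈ range k, Q ^ i, Q ^ k)) atTop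
      (𝓝 ((1 - Q)⁻¹, 0)) :=
    (tendsto_geom_sum_of_isTopologicallyNilpotent hu hQ).prodMk_nhds hQ
  simpa only [Function.comp_def, fromBlocks_one_zero_pow] using
    (assemble_continuous.tendsto ((1 - Q)⁻¹, 0)).comp blocks_tendsto

end BlockPowers

section RowSums

attribute [local instance] Matrix.linftyOpNormedAddCommGroup Matrix.linftyOpNormedRing

variable {l m n p α : Type*} [Fintype l] [Fintype m] [Fintype n] [Fintype p]

theorem linfty_opNorm_le_iff [NormedAddCommGroup α] {M : Matrix m n α} {c : ℝ} (hc : 0 ≤ c) :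
    ‖M‖ ≤ c ↔ ∀ i, ∑ j, ‖M i j‖ ≤ c := by
  lift c to NNReal using hc
  simp only [← coe_nnnorm, ← NNReal.coe_sum, NNReal.coe_le_coe, linfty_opNNNorm_def,
    Finset.sup_le_iff, mem_univ, true_imp_iff]

theorem linfty_opNorm_lt_iff [NormedAddCommGroup α] {M : Matrix m n α} {c : ℝ} (hc : 0 < c) :
    ‖M‖ < c ↔ ∀ i, ∑ j, ‖M i j‖ < c := by
  lift c to NNReal using hc.le
  simp only [← coe_nnnorm, ← NNReal.coe_sum, NNReal.coe_lt_coe, linfty_opNNNorm_def,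
    Finset.sup_lt_iff (NNReal.coe_pos.1 hc), mem_univ, true_imp_iff]

theorem sum_norm_row_le_linfty_opNorm [NormedAddCommGroup α] (M : Matrix m n α) (i : m) :
    ∑ j, ‖M i j‖ ≤ ‖M‖ :=
  (linfty_opNorm_le_iff (norm_nonneg M)).1 le_rfl i

theorem sum_norm_row_fromBlocks_le [NormedAddCommGroup α] (A : Matrix m n α) (B : Matrix m p α)
    (C : Matrix l n α) (D : Matrix l p α) (i : l) :
    ∑ j, ‖C i j‖ + ∑ j, ‖D i j‖ ≤ ‖fromBlocks A B C D‖ := by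
  simpa only [Fintype.sum_sum_type, fromBlocks_apply₂₁, fromBlocks_apply₂₂] using
    sum_norm_row_le_linfty_opNorm (fromBlocks A B C D) (Sum.inr i)

theorem linfty_opNorm_le_fromBlocks₂₂ [NormedAddCommGroup α] (A : Matrix m n α)
    (B : Matrix m p α) (C : Matrix l n α) (D : Matrix l p α) : ‖D‖ ≤ ‖fromBlocks A B C D‖ :=
  (linfty_opNorm_le_iff (norm_nonneg _)).2 fun i ↦
    (le_add_of_nonneg_left (sum_nonneg fun _ _ ↦ norm_nonneg _)).trans
      (sum_norm_row_fromBlocks_le A B C D i)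

theorem sum_norm_vecMul_le [NormedRing α] (v : m → α) (M : Matrix m n α) :
    ∑ j, ‖(v ᵥ* M) j‖ ≤ (∑ i, ‖v i‖) * ‖M‖ := by
  simpa only [← linfty_opNorm_replicateRow (ι := Unit), replicateRow_vecMul] using
    linfty_opNorm_mul (replicateRow Unit v) M

variable [DecidableEq n]

theorem antitone_sum_norm_row_pow [NormedRing α] {Q : Matrix n n α} (hQ : ‖Q‖ ≤ 1) (i : n) :
    Antitone fun k : ℕ ↦ ∑ j, ‖(Q ^ k) i j‖ :=
  antitone_nat_of_succ_le fun k ↦ by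
    simp only [pow_succ, mul_apply_eq_vecMul]
    exact (sum_norm_vecMul_le _ _).trans
      (mul_le_of_le_one_right (sum_nonneg fun _ _ ↦ norm_nonneg _) hQ)

theorem isTopologicallyNilpotent_of_sum_norm_row_pow_lt_one [NormedRing α] {Q : Matrix n n α}
    (hQ : ‖Q‖ ≤ 1) (hrow : ∀ i, ∃ k : ℕ, ∑ j, ‖(Q ^ k) i j‖ < 1) :
    IsTopologicallyNilpotent Q := by
  have rows_eventually_lt : ∀ᶠ k : ℕ in atTop, ∀ i, ∑ j, ‖(Q ^ k) i j‖ < 1 :=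
    eventually_all.2 fun i ↦ by
      obtain ⟨k₀, hk₀⟩ := hrow i
      filter_upwards [eventually_ge_atTop k₀] with k hk
      exact (antitone_sum_norm_row_pow hQ i hk).trans_lt hk₀
  obtain ⟨N, hlt, hN⟩ := (rows_eventually_lt.and (eventually_ne_atTop 0)).exists
  exact isTopologicallyNilpotent_of_pow hN
    (tendsto_pow_atTop_nhds_zero_of_norm_lt_one ((linfty_opNorm_lt_iff one_pos).2 hlt))

variable [DecidableEq m]

theorem sum_norm_row_pow_lt_one_of_ne_zero [NormedRing α] {R : Matrix n m α} {Q : Matrix n n α}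
    (hT : ‖fromBlocks (1 : Matrix m m α) 0 R Q‖ ≤ 1) {k : ℕ} {i : n} {j : m}
    (hreach : (fromBlocks (1 : Matrix m m α) 0 R Q ^ k) (Sum.inr i) (Sum.inl j) ≠ 0) :
    ∑ j, ‖(Q ^ k) i j‖ < 1 := by
  have hk : 0 < k := by
    refine Nat.pos_of_ne_zero fun hk ↦ hreach ?_
    rw [hk, pow_zero, one_apply_ne Sum.inr_ne_inl]
  have norm_pow_le_one : ‖fromBlocks (1 : Matrix m m α) 0 R Q ^ k‖ ≤ 1 :=
    (norm_pow_le' _ hk).trans (pow_le_one₀ (norm_nonneg _) hT)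
  rw [fromBlocks_one_zero_pow] at norm_pow_le_one hreach
  rw [fromBlocks_apply₂₁] at hreach
  have absorbed_pos : 0 < ∑ j, ‖((∑ s ∈ range k, Q ^ s) * R) i j‖ :=
    sum_pos' (fun _ _ ↦ norm_nonneg _) ⟨j, mem_univ j, norm_pos_iff.2 hreach⟩
  exact (lt_add_of_pos_left _ absorbed_pos).trans_le
    ((sum_norm_row_fromBlocks_le _ _ _ _ i).trans norm_pow_le_one)

theorem absorbing_chain_limit_general [NormedCommRing α] [HasSummableGeomSeries α]
    (R : Matrix n m α) (Q : Matrix n n α) (T : Matrix (m ⊕ n) (m ⊕ n) α)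
    (hT : T = fromBlocks 1 0 R Q) (hrow : ∀ p, ∑ q, ‖T p q‖ ≤ 1)
    (hreach : ∀ i : n, ∃ (k : ℕ) (j : m), (T ^ k) (Sum.inr i) (Sum.inl j) ≠ 0) :
    IsUnit (1 - Q) ∧
      Tendsto (fun k : ℕ ↦ T ^ k) atTop (𝓝 (fromBlocks 1 0 ((1 - Q)⁻¹ * R) 0)) := by
  subst hT
  have norm_T_le : ‖fromBlocks (1 : Matrix m m α) 0 R Q‖ ≤ 1 :=
    (linfty_opNorm_le_iff zero_le_one).2 hrow
  have norm_Q_le : ‖Q‖ ≤ 1 := (linfty_opNorm_le_fromBlocks₂₂ _ _ _ _).trans norm_T_le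
  have hQ : IsTopologicallyNilpotent Q :=
    isTopologicallyNilpotent_of_sum_norm_row_pow_lt_one norm_Q_le fun i ↦
      let ⟨k, _, hk⟩ := hreach i
      ⟨k, sum_norm_row_pow_lt_one_of_ne_zero norm_T_le hk⟩
  have hu : IsUnit (1 - Q) := isUnit_one_sub_of_isTopologicallyNilpotent hQ
  exact ⟨hu, tendsto_fromBlocks_one_zero_pow R hu hQ⟩

end RowSums

/-- For an absorbing Markov chain in block form `T = fromBlocks I 0 R Q`, the matrix
`I - Q` is invertible and `T ^ n` converges entrywise to `fromBlocks I 0 ((I - Q)⁻¹ * R) 0`. -/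
theorem absorbing_chain_limit {A Tr : Type*} [Fintype A] [Fintype Tr]
    [DecidableEq A] [DecidableEq Tr]
    (R : Matrix Tr A ℝ) (Q : Matrix Tr Tr ℝ)
    (T : Matrix (A ⊕ Tr) (A ⊕ Tr) ℝ)
    (hT : T = Matrix.fromBlocks 1 0 R Q)
    (hnn : ∀ p q, 0 ≤ T p q)
    (hrow : ∀ p, ∑ q, T p q = 1)
    (hreach : ∀ i : Tr, ∃ (n : ℕ) (j : A), 0 < (T ^ n) (Sum.inr i) (Sum.inl j)) :
    IsUnit (1 - Q) ∧
      Filter.Tendsto (fun n : ℕ => T ^ n) Filter.atTop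
        (nhds (Matrix.fromBlocks 1 0 ((1 - Q)⁻¹ * R) 0)) :=
  absorbing_chain_limit_general R Q T hT
    (fun p ↦ by simpa only [Real.norm_of_nonneg (hnn _ _)] using (hrow p).le)
    fun i ↦ (hreach i).imp fun _ ↦ Exists.imp fun _ ↦ LT.lt.ne'
end

section
/- For every predicate t there exists a finite set of packets b_t ∈ Finset Pk such that for all a, c ∈ Finset Pk, ⟦t⟧_{a,c} = [c = a ∩ b_t]. Moreover b_t can be chosen compositionally: b_drop = ∅, b_skip = the set of all packets, b_{(f=v)} = {π ∈ Pk | π f = v}, b_{¬t} = (set of all packets) ∖ b_t, b_{t₁∨t₂} = b_{t₁} ∪ b_{t₂}, and b_{t₁;t₂} = b_{t₁} ∩ b_{t₂}. -/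
/-- NetKAT-style predicates over fields `F` and values `V`:
`drop`, `skip`, tests `f = v`, disjunction, conjunction (sequencing), and negation. -/
inductive NKPred (F V : Type*) where
  | drop : NKPred F V
  | skip : NKPred F V
  | test : F → V → NKPred F V
  | or : NKPred F V → NKPred F V → NKPred F V
  | seq : NKPred F V → NKPred F V → NKPred F V
  | not : NKPred F V → NKPred F V

variable {F V : Type*} [Fintype F] [Fintype V] [DecidableEq F] [DecidableEq V]

/-- The matrix semantics of a predicate, indexed by sets of packets `Finset (F → V)`. -/
noncomputable def NKPred.sem : NKPred F V → Matrix (Finset (F → V)) (Finset (F → V)) ℝ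
  | .drop => fun _ b => if b = ∅ then 1 else 0
  | .skip => fun a b => if b = a then 1 else 0
  | .test f v => fun a b => if b = a.filter (fun π => π f = v) then 1 else 0
  | .not t => fun a b => (if b ⊆ a then (1 : ℝ) else 0) * t.sem a (a \ b)
  | .or t₁ t₂ => fun a b =>
      ∑ c, ∑ d, (if c ∪ d = b then (1 : ℝ) else 0) * t₁.sem a c * t₂.sem a d
  | .seq t₁ t₂ => t₁.sem * t₂.sem

/-- The compositionally chosen packet set `b_t` associated with a predicate `t`. -/
def NKPred.bset : NKPred F V → Finset (F → V)
  | .drop => ∅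
  | .skip => Finset.univ
  | .test f v => Finset.univ.filter (fun π => π f = v)
  | .not t => Finset.univ \ t.bset
  | .or t₁ t₂ => t₁.bset ∪ t₂.bset
  | .seq t₁ t₂ => t₁.bset ∩ t₂.bset

/-!
Every predicate denotes a deterministic matrix, one whose row `a` is the point mass at `φ a`.
On such matrices the operations of the semantics act on the functions `φ`: the matrix product
composes them, the convolution along `∪` takes their pointwise union, and negation replaces
`φ a` by `a \ φ a` as soon as `φ a ⊆ a`. All of these preserve the shape `φ a = a ∩ b`.
-/

section DiracMatrix

variable {α β γ δ : Type*}

/-- The deterministic matrix of a function `φ`: row `a` is the point mass at `φ a`. It is the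
Markov kernel of `φ`, encoded as a matrix. -/
def diracMatrix (R : Type*) [Zero R] [One R] [DecidableEq β] (φ : α → β) : Matrix α β R :=
  Matrix.of fun a b => if b = φ a then 1 else 0

variable {R : Type*}

theorem diracMatrix_apply [Zero R] [One R] [DecidableEq β] (φ : α → β) (a : α) (b : β) :
    diracMatrix R φ a b = if b = φ a then 1 else 0 :=
  rfl

theorem le_and_sdiff_eq_iff_eq_sdiff [GeneralizedBooleanAlgebra α] {a b c : α} (hb : b ≤ a) :
    c ≤ a ∧ a \ c = b ↔ c = a \ b := by
  constructor
  · rintro ⟨hc, rfl⟩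
    exact (sdiff_sdiff_eq_self hc).symm
  · rintro rfl
    exact ⟨sdiff_le, sdiff_sdiff_eq_self hb⟩

theorem boole_le_mul_diracMatrix_sdiff [MulZeroOneClass R] [GeneralizedBooleanAlgebra α]
    [DecidableEq α] [DecidableLE α] (φ : α → α) {a : α} (ha : φ a ≤ a) (c : α) :
    (if c ≤ a then 1 else 0) * diracMatrix R φ a (a \ c) =
      diracMatrix R (fun x => x \ φ x) a c := by
  simp only [diracMatrix_apply, boole_mul, ← ite_and, le_and_sdiff_eq_iff_eq_sdiff ha]

variable [NonAssocSemiring R]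

theorem sum_diracMatrix_mul [Fintype β] [DecidableEq β] (φ : α → β) (a : α) (w : β → R) :
    ∑ b, diracMatrix R φ a b * w b = w (φ a) := by
  simp only [diracMatrix_apply, boole_mul, Finset.sum_ite_eq', Finset.mem_univ, if_true]

theorem sum_mul_diracMatrix [Fintype β] [DecidableEq β] (φ : α → β) (a : α) (w : β → R) :
    ∑ b, w b * diracMatrix R φ a b = w (φ a) := by
  simp only [diracMatrix_apply, mul_boole, Finset.sum_ite_eq', Finset.mem_univ, if_true]

theorem diracMatrix_mul_diracMatrix [Fintype β] [DecidableEq β] [DecidableEq γ]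
    (φ : α → β) (ψ : β → γ) :
    diracMatrix R φ * diracMatrix R ψ = diracMatrix R (ψ ∘ φ) := by
  ext a c
  exact sum_diracMatrix_mul φ a fun b => diracMatrix R ψ b c

theorem sum_sum_boole_mul_diracMatrix_mul_diracMatrix
    [Fintype β] [Fintype γ] [DecidableEq β] [DecidableEq γ] [DecidableEq δ]
    (op : β → γ → δ) (φ : α → β) (ψ : α → γ) (a : α) (d : δ) :
    ∑ b, ∑ c, (if op b c = d then 1 else 0) * diracMatrix R φ a b * diracMatrix R ψ a c =
      diracMatrix R (fun x => op (φ x) (ψ x)) a d := by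
  simp only [sum_mul_diracMatrix]
  exact if_congr eq_comm rfl rfl

end DiracMatrix

/-- Every predicate `t` acts as intersection with the packet set `b_t`:
`⟦t⟧_{a,c} = [c = a ∩ b_t]`, with `b_t` chosen compositionally as in `NKPred.bset`. -/
theorem NKPred.sem_eq_inter_bset (t : NKPred F V) (a c : Finset (F → V)) :
    t.sem a c = if c = a ∩ t.bset then 1 else 0 := by
  suffices h : t.sem = diracMatrix ℝ (· ∩ t.bset) from congr_fun₂ h a c
  clear a c
  induction t with
  | drop => simp only [sem, bset, Finset.inter_empty]; rfl
  | skip => simp only [sem, bset, Finset.inter_univ]; rfl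
  | test f v => simp only [sem, bset, Finset.inter_filter, Finset.inter_univ]; rfl
  | not t ih =>
    have inter_univ_sdiff (a : Finset (F → V)) : a ∩ (Finset.univ \ t.bset) = a \ (a ∩ t.bset) := by
      rw [← Finset.inter_sdiff_assoc, Finset.inter_univ, Finset.sdiff_inter_self_left]
    ext a c
    simp only [sem, bset, ih, inter_univ_sdiff]
    exact boole_le_mul_diracMatrix_sdiff (R := ℝ) (· ∩ t.bset) Finset.inter_subset_left c
  | or t₁ t₂ ih₁ ih₂ =>
    ext a c
    simp only [sem, bset, ih₁, ih₂, Finset.inter_union_distrib_left]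
    exact sum_sum_boole_mul_diracMatrix_mul_diracMatrix (· ∪ ·) _ _ a c
  | seq t₁ t₂ ih₁ ih₂ =>
    simp only [sem, bset, ih₁, ih₂, ← Finset.inter_assoc]
    exact diracMatrix_mul_diracMatrix _ _
end
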